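/- Let ρ ∈ (0,1] and define a_i = ρ·Γ(ρ+i)/((ρ+i)·Γ(ρ)·Γ(i+1)) for integers i ≥ 0 (these are the Taylor coefficients of x ↦ ρ·B(x;ρ,1−ρ)/x^ρ at 0). Then for every integer i ≥ 2, the log-convexity condition a_i·a_{i−2} ≥ a_{i−1}² holds; explicitly, a_i·a_{i−2}/a_{i−1}² = (i−1)(i+ρ−1)³/(i·(i+ρ−2)²·(i+ρ)) ≥ 1. -/

import Mathlib

/-!
Consecutive coefficients have quotient `r n = (ρ + n) ^ 2 / ((ρ + n + 1) * (n + 1))`, so that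
`a (n + 2) * a n / a (n + 1) ^ 2 = r (n + 1) / r n`, and log-convexity becomes a polynomial
inequality. Its two sides, of degree four in `n`, differ by
`(2 - ρ) * n ^ 2 + (4 + ρ - 2 * ρ ^ 2) * n + (1 + 3 * ρ - ρ ^ 2 - ρ ^ 3)`. For `-1 < ρ` all three
coefficients are nonnegative as soon as the constant one is, that is, as soon as the inequality
holds at `n = 0`.
-/

theorem add_natCast_ne_zero {R : Type*} [AddGroupWithOne R] {x : R} (hx : ∀ m : ℕ, x ≠ -m)
    (n : ℕ) : x + n ≠ 0 :=
  fun h => hx n (eq_neg_of_add_eq_zero_left h)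

theorem ne_neg_natCast_of_neg_one_lt {R : Type*} [Ring R] [LinearOrder R] [IsStrictOrderedRing R]
    {x : R} (hx : -1 < x) (hx0 : x ≠ 0) (m : ℕ) : x ≠ -m := by
  rintro rfl
  have hm : m < 1 := by exact_mod_cast neg_lt_neg_iff.1 hx
  exact hx0 (by simp [Nat.lt_one_iff.1 hm])

/-- The `n`-th Taylor coefficient at `0` of `x ↦ ρ * B(x; ρ, 1 - ρ) / x ^ ρ` for `0 < ρ`, with `B`
the incomplete Beta function. The Gamma-function formula makes sense for every real `ρ` other than
`0, -1, -2, …`, and the power series is then that of `₂F₁(ρ, ρ; ρ + 1; x)`. -/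
noncomputable def betaCoeff (ρ : ℝ) (n : ℕ) : ℝ :=
  ρ * Real.Gamma (ρ + n) / ((ρ + n) * Real.Gamma ρ * Real.Gamma (n + 1))

section Coefficients

variable {ρ : ℝ}

theorem betaCoeff_ne_zero (hρ : ∀ m : ℕ, ρ ≠ -m) (n : ℕ) : betaCoeff ρ n ≠ 0 := by
  have hρ0 : ρ ≠ 0 := by simpa using hρ 0
  have hΓn : Real.Gamma (ρ + n) ≠ 0 := Real.Gamma_ne_zero fun m h =>
    hρ (n + m) (by push_cast; linarith)
  have hfact : Real.Gamma ((n : ℝ) + 1) ≠ 0 := (Real.Gamma_pos_of_pos (by positivity)).ne'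
  exact div_ne_zero (mul_ne_zero hρ0 hΓn)
    (mul_ne_zero (mul_ne_zero (add_natCast_ne_zero hρ n) (Real.Gamma_ne_zero hρ)) hfact)

theorem betaCoeff_succ {n : ℕ} (hn : ρ + n ≠ 0) :
    betaCoeff ρ (n + 1) = (ρ + n) ^ 2 / ((ρ + n + 1) * (n + 1)) * betaCoeff ρ n := by
  have hΓ : Real.Gamma (ρ + n + 1) = (ρ + n) * Real.Gamma (ρ + n) := Real.Gamma_add_one hn
  have hfact : Real.Gamma ((n : ℝ) + 1 + 1) = (n + 1) * Real.Gamma (n + 1) :=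
    Real.Gamma_add_one (by positivity)
  simp only [betaCoeff, Nat.cast_add, Nat.cast_one, ← add_assoc, hΓ, hfact]
  field_simp

theorem betaCoeff_succ_div (hρ : ∀ m : ℕ, ρ ≠ -m) (n : ℕ) :
    betaCoeff ρ (n + 1) / betaCoeff ρ n = (ρ + n) ^ 2 / ((ρ + n + 1) * (n + 1)) :=
  (div_eq_iff (betaCoeff_ne_zero hρ n)).2 (betaCoeff_succ (add_natCast_ne_zero hρ n))

theorem betaCoeff_mul_div_sq (hρ : ∀ m : ℕ, ρ ≠ -m) (n : ℕ) :
    betaCoeff ρ (n + 2) * betaCoeff ρ n / betaCoeff ρ (n + 1) ^ 2 =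
      (n + 1) * (ρ + n + 1) ^ 3 / ((n + 2) * (ρ + n) ^ 2 * (ρ + n + 2)) :=
  calc betaCoeff ρ (n + 2) * betaCoeff ρ n / betaCoeff ρ (n + 1) ^ 2
      = betaCoeff ρ (n + 1 + 1) / betaCoeff ρ (n + 1) /
          (betaCoeff ρ (n + 1) / betaCoeff ρ n) := by rw [div_div_div_eq, sq]
    _ = (ρ + n + 1) ^ 2 / ((ρ + n + 2) * (n + 2)) / ((ρ + n) ^ 2 / ((ρ + n + 1) * (n + 1))) := by
        rw [betaCoeff_succ_div hρ, betaCoeff_succ_div hρ]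
        push_cast
        ring_nf
    _ = (n + 1) * (ρ + n + 1) ^ 3 / ((n + 2) * (ρ + n) ^ 2 * (ρ + n + 2)) := by
        field_simp

end Coefficients

theorem lt_three_halves_of_cube_add_sq_le {ρ : ℝ} (h : ρ ^ 3 + ρ ^ 2 ≤ 3 * ρ + 1) :
    ρ < 3 / 2 := by
  by_contra! hρ
  have hprod : 0 ≤ (ρ - 3 / 2) * (ρ ^ 2 + 5 / 2 * ρ + 3 / 4) :=
    mul_nonneg (sub_nonneg.2 hρ) (by positivity)
  refine h.not_gt ?_
  calc 3 * ρ + 1 < 3 * ρ + 1 + (ρ - 3 / 2) * (ρ ^ 2 + 5 / 2 * ρ + 3 / 4) + 1 / 8 := by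
        linarith
    _ = ρ ^ 3 + ρ ^ 2 := by ring

theorem add_two_mul_sq_mul_le_add_one_mul_cube {ρ t : ℝ} (hρ : -1 < ρ)
    (h : ρ ^ 3 + ρ ^ 2 ≤ 3 * ρ + 1) (ht : 0 ≤ t) :
    (t + 2) * (ρ + t) ^ 2 * (ρ + t + 2) ≤ (t + 1) * (ρ + t + 1) ^ 3 := by
  have hlt : ρ < 3 / 2 := lt_three_halves_of_cube_add_sq_le h
  have hquadratic : 0 ≤ 2 - ρ := by linarith
  have hlinear : 0 ≤ 4 + ρ - 2 * ρ ^ 2 := by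
    linarith [mul_pos (neg_lt_iff_pos_add.1 hρ) (sub_pos.2 hlt)]
  have hconstant : 0 ≤ 1 + 3 * ρ - ρ ^ 2 - ρ ^ 3 := by linarith
  rw [← sub_nonneg]
  calc 0 ≤ (2 - ρ) * t ^ 2 + (4 + ρ - 2 * ρ ^ 2) * t + (1 + 3 * ρ - ρ ^ 2 - ρ ^ 3) := by
        positivity
    _ = (t + 1) * (ρ + t + 1) ^ 3 - (t + 2) * (ρ + t) ^ 2 * (ρ + t + 2) := by ring

theorem betaCoeff_sq_le_mul {ρ : ℝ} (hρ : -1 < ρ) (hρ0 : ρ ≠ 0)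
    (h : ρ ^ 3 + ρ ^ 2 ≤ 3 * ρ + 1) (n : ℕ) :
    betaCoeff ρ (n + 1) ^ 2 ≤ betaCoeff ρ (n + 2) * betaCoeff ρ n := by
  have hpole : ∀ m : ℕ, ρ ≠ -m := ne_neg_natCast_of_neg_one_lt hρ hρ0
  have hn : (0 : ℝ) ≤ n := n.cast_nonneg
  have hsq : 0 < (ρ + n) ^ 2 := sq_pos_of_ne_zero (add_natCast_ne_zero hpole n)
  have hadd : 0 < ρ + n + 2 := by linarith
  have hcoeff : 0 < betaCoeff ρ (n + 1) ^ 2 :=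
    sq_pos_of_ne_zero (betaCoeff_ne_zero hpole (n + 1))
  rw [← one_le_div hcoeff, betaCoeff_mul_div_sq hpole, one_le_div (by positivity)]
  exact add_two_mul_sq_mul_le_add_one_mul_cube hρ h hn

theorem beta_coeffs_log_convex_general {ρ : ℝ} (hρ : -1 < ρ) (hρ0 : ρ ≠ 0)
    (h : ρ ^ 3 + ρ ^ 2 ≤ 3 * ρ + 1) (i : ℕ) (hi : 2 ≤ i) :
    betaCoeff ρ i * betaCoeff ρ (i - 2) / betaCoeff ρ (i - 1) ^ 2
        = (i - 1 : ℝ) * (i + ρ - 1) ^ 3 / (i * (i + ρ - 2) ^ 2 * (i + ρ)) ∧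
      betaCoeff ρ (i - 1) ^ 2 ≤ betaCoeff ρ i * betaCoeff ρ (i - 2) := by
  obtain ⟨n, rfl⟩ := Nat.exists_eq_add_of_le' hi
  refine ⟨(betaCoeff_mul_div_sq (ne_neg_natCast_of_neg_one_lt hρ hρ0) n).trans ?_,
    betaCoeff_sq_le_mul hρ hρ0 h n⟩
  push_cast
  ring_nf

theorem beta_coeffs_log_convex (ρ : ℝ) (hρ : ρ ∈ Set.Ioc (0:ℝ) 1)
    (a : ℕ → ℝ)
    (ha : ∀ i : ℕ, a i = ρ * Real.Gamma (ρ + i) / ((ρ + i) * Real.Gamma ρ * Real.Gamma (i + 1))) :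
    ∀ i : ℕ, 2 ≤ i →
      a i * a (i - 2) / a (i - 1) ^ 2
          = (i - 1 : ℝ) * (i + ρ - 1) ^ 3 / (i * (i + ρ - 2) ^ 2 * (i + ρ)) ∧
      a (i - 1) ^ 2 ≤ a i * a (i - 2) := by
  obtain rfl : a = betaCoeff ρ := funext ha
  have hcubic : ρ ^ 3 + ρ ^ 2 ≤ 3 * ρ + 1 := by
    linarith [hρ.1, pow_le_of_le_one hρ.1.le hρ.2 two_ne_zero,
      pow_le_of_le_one hρ.1.le hρ.2 three_ne_zero]
  exact beta_coeffs_log_convex_general (by linarith [hρ.1]) hρ.1.ne' hcubic
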